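/- For every x < 0, the function G_x(s) = (1/2)s^2 - (3/4)|s - x|^{4/3} attains its global minimum on R exactly at the point s = v^+(x), so that m(x) = (1/2)v^+(x)^2 - (3/4)(v^+(x) - x)^{4/3}. Symmetrically, for every x > 0, G_x attains its global minimum exactly at s = v^-(x), so that m(x) = (1/2)v^-(x)^2 - (3/4)(x - v^-(x))^{4/3}. -/

import Mathlib

/-- The minimized function in the coordinate `s = x + t³`, compared with its value at `t = v`. -/
lemma quartic_lt {v t : ℝ} (hv : 1 < v ^ 2) (ht : t ≠ v) :
    (1 / 2) * v ^ 2 - (3 / 4) * v ^ 4 <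
      (1 / 2) * (v - v ^ 3 + t ^ 3) ^ 2 - (3 / 4) * t ^ 4 := by
  have htv : 0 < (t - v) ^ 2 := by
    have := sub_ne_zero.mpr ht
    positivity
  have hq : 0 < 3 * t ^ 2 + 2 * t * v + v ^ 2 := by
    nlinarith [sq_nonneg (t + v), sq_nonneg (2 * t + v), sq_nonneg t]
  have hfactor : 0 < (t + v) ^ 2 * (2 * t ^ 2 + v ^ 2) +
      (v ^ 2 - 1) * (3 * t ^ 2 + 2 * t * v + v ^ 2) :=
    add_pos_of_nonneg_of_pos (by positivity) (mul_pos (by linarith) hq)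
  linear_combination (1 / 4) * mul_pos htv hfactor

lemma abs_cube_rpow_four_thirds (t : ℝ) : |t ^ 3| ^ ((4 : ℝ) / 3) = t ^ 4 := by
  rw [abs_pow, ← Real.rpow_natCast, ← Real.rpow_mul (abs_nonneg t),
    show ((3 : ℕ) : ℝ) * (4 / 3) = ((4 : ℕ) : ℝ) by norm_num, Real.rpow_natCast]
  exact Even.pow_abs (by decide) t

lemma exists_cube_eq (y : ℝ) : ∃ t : ℝ, t ^ 3 = y := by
  have hcube (z : ℝ) (hz : 0 ≤ z) : (z ^ ((3 : ℕ) : ℝ)⁻¹) ^ 3 = z :=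
    Real.rpow_inv_natCast_pow hz three_ne_zero
  rcases le_total 0 y with hy | hy
  · exact ⟨_, hcube y hy⟩
  · exact ⟨-((-y) ^ ((3 : ℕ) : ℝ)⁻¹), by
      rw [Odd.neg_pow (by decide), hcube _ (by linarith), neg_neg]⟩

lemma lt_of_ne_root {x v s : ℝ} (hv : 1 < v ^ 2) (hx : v - v ^ 3 = x) (hs : s ≠ v) :
    (1 / 2) * v ^ 2 - (3 / 4) * |v - x| ^ ((4 : ℝ) / 3) <
      (1 / 2) * s ^ 2 - (3 / 4) * |s - x| ^ ((4 : ℝ) / 3) := by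
  obtain ⟨t, ht⟩ := exists_cube_eq (s - x)
  have hvx : v - x = v ^ 3 := by linarith
  obtain rfl : s = v - v ^ 3 + t ^ 3 := by linarith
  rw [hvx, ← ht, abs_cube_rpow_four_thirds, abs_cube_rpow_four_thirds]
  refine quartic_lt hv fun h => hs ?_
  rw [h]
  ring

lemma setOf_forall_le_eq_singleton_and_iInf_eq {α : Type*} {f : α → ℝ} {a : α}
    (h : ∀ b, b ≠ a → f a < f b) :
    {b | ∀ c, f b ≤ f c} = {a} ∧ ⨅ b, f b = f a := by
  have hle : ∀ b, f a ≤ f b := fun b => by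
    rcases eq_or_ne b a with rfl | hb
    · exact le_rfl
    · exact (h b hb).le
  refine ⟨Set.ext fun b => ⟨fun hb => ?_, ?_⟩, ?_⟩
  · by_contra hne
    exact (h b hne).not_ge (hb a)
  · rintro rfl
    exact hle
  · exact IsLeast.csInf_eq ⟨⟨a, rfl⟩, by rintro _ ⟨b, rfl⟩; exact hle b⟩

/-- For `x < 0` the function `G_x(s) = ½s² - ¾|s-x|^{4/3}` attains its global minimum
exactly at the unique positive root `v⁺(x)` of `v - v³ = x`, so that
`m(x) = ½ v⁺(x)² - ¾ (v⁺(x) - x)^{4/3}`; symmetrically for `x > 0` with the unique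
negative root `v⁻(x)`. -/
theorem minimizer_of_Gx :
    let G : ℝ → ℝ → ℝ := fun x s =>
      (1 / 2) * s ^ 2 - (3 / 4) * |s - x| ^ ((4 : ℝ) / 3)
    let m : ℝ → ℝ := fun x => ⨅ s : ℝ, G x s
    (∀ x : ℝ, x < 0 → ∀ v : ℝ, 0 < v → v - v ^ 3 = x →
      {s : ℝ | ∀ r : ℝ, G x s ≤ G x r} = {v} ∧
      m x = (1 / 2) * v ^ 2 - (3 / 4) * (v - x) ^ ((4 : ℝ) / 3)) ∧
    (∀ x : ℝ, 0 < x → ∀ v : ℝ, v < 0 → v - v ^ 3 = x →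
      {s : ℝ | ∀ r : ℝ, G x s ≤ G x r} = {v} ∧
      m x = (1 / 2) * v ^ 2 - (3 / 4) * (x - v) ^ ((4 : ℝ) / 3)) := by
  intro G m
  refine ⟨fun x hx v hv hroot => ?_, fun x hx v hv hroot => ?_⟩
  · have hv1 : 1 < v ^ 2 := by nlinarith
    rw [← abs_of_pos (show 0 < v - x by linarith)]
    exact setOf_forall_le_eq_singleton_and_iInf_eq fun s hs => lt_of_ne_root hv1 hroot hs
  · have hv1 : 1 < v ^ 2 := by nlinarith
    rw [← abs_of_pos (show 0 < x - v by linarith), abs_sub_comm x v]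
    exact setOf_forall_le_eq_singleton_and_iInf_eq fun s hs => lt_of_ne_root hv1 hroot hs
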